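/- arXiv:2012.13655 — 2 statements merged into one kernel-verified Lean document; each statement's English description precedes it below -/
import Mathlib

section
/- Let k₁, …, k_N ≥ 2 be integers with N ≥ 2. Then w = a₁^{k₁} ⋯ a_N^{k_N} is not simple in F_N = F(a₁, …, a_N); that is, w does not lie in any proper free factor of F_N. In particular w is not primitive. -/
noncomputable section

abbrev F2 := FreeGroup (Fin 2)

def a : F2 := FreeGroup.of 0
def b : F2 := FreeGroup.of 1

/-- An element of a group is primitive if it belongs to some free basis of the group. -/
def Primitive {G : Type*} [Group G] (g : G) : Prop :=
  ∃ (ι : Type) (bas : FreeGroupBasis ι G) (i : ι), bas i = g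

/-- An element of a group is simple if it lies in a proper free factor, i.e. there is a
free product decomposition `G = A ∗ B` with `A`, `B` nontrivial and `g ∈ A`. -/
def SimpleElem {G : Type*} [Group G] (g : G) : Prop :=
  ∃ A B : Subgroup G, A ≠ ⊥ ∧ B ≠ ⊥ ∧ g ∈ A ∧
    Function.Bijective (Monoid.Coprod.lift A.subtype B.subtype)

/-- The primitivity index: the smallest (finite) index of a subgroup `H ≤ F₂` containing `g`
in which `g` is primitive. -/
def dPrim (g : F2) : ℕ :=
  sInf {n : ℕ | 0 < n ∧ ∃ H : Subgroup F2, H.index = n ∧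
    ∃ hg : g ∈ H, Primitive (⟨g, hg⟩ : H)}

/-- The simplicity index: the smallest (finite) index of a subgroup `H ≤ F₂` containing `g`
in which `g` is simple. -/
def dSimp (g : F2) : ℕ :=
  sInf {n : ℕ | 0 < n ∧ ∃ H : Subgroup F2, H.index = n ∧
    ∃ hg : g ∈ H, SimpleElem (⟨g, hg⟩ : H)}

/-- `smallestNonDivisor n` is the smallest integer `d ≥ 2` with `d ∤ n`. -/
def smallestNonDivisor (n : ℕ) : ℕ := sInf {d : ℕ | 2 ≤ d ∧ ¬ d ∣ n}

/-!
Fix a word `w` and consider the characters `ψ` of the ambient group such that every crossed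
homomorphism over `ψ` vanishes at `w`. If `w` lies in a free factor `A` of `A ∗ B`, then whether `ψ`
has this property depends only on the restriction of `ψ` to `A`; as the characters of the nontrivial
free group `B` are infinite in number, the set of such `ψ` is empty or infinite. If `w` is
primitive, the set is empty, since a crossed homomorphism may take any value at a basis element.

For `w = ∏ xᵢ ^ kᵢ` over `ℂ` the set is finite and nonempty. If `u = ψ xᵢ`, then
`(u - 1) * d (xᵢ ^ kᵢ) = (u ^ kᵢ - 1) * d xᵢ`. Hence every `d` kills `w` once each `ψ xᵢ ≠ 1` is a
`kᵢ`-th root of unity, and conversely, the `d` with `d xᵢ = 1` that vanishes at the other generators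
forces `(ψ xᵢ) ^ kᵢ = 1`.
-/

/-- A crossed homomorphism over a character `ψ`: a 1-cocycle of `G` with values in `R`, on which
`G` acts through `ψ`. -/
def IsCrossedHom {G R : Type*} [Group G] [CommRing R] (ψ : G →* Rˣ) (d : G → R) : Prop :=
  ∀ x y, d (x * y) = d x + ψ x * d y

/-- The characters of `G` over which every crossed homomorphism vanishes at `w`. If `G` is free on
`x₁, …, xₙ`, then `d w = ∑ i, ψ (∂w/∂xᵢ) * d xᵢ` and the values `d xᵢ` are arbitrary, so this is the
common zero locus of the Fox derivatives `∂w/∂xᵢ` in the torus of characters. -/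
def foxZeroLocus {G : Type*} (R : Type*) [Group G] [CommRing R] (w : G) : Set (G →* Rˣ) :=
  {ψ | ∀ d, IsCrossedHom ψ d → d w = 0}

/-- The group of affine maps `z ↦ u * z + v` of the line over `R`, as the pairs `⟨v, u⟩`. -/
abbrev AffineGroup (R : Type*) [CommRing R] : Type _ :=
  Multiplicative R ⋊[(MulAutMultiplicative R).symm.toMonoidHom.comp AddAut.mulLeft] Rˣ

namespace IsCrossedHom

variable {G R : Type*} [Group G] [CommRing R] {ψ : G →* Rˣ} {d : G → R}

theorem map_one (hd : IsCrossedHom ψ d) : d 1 = 0 := by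
  simpa using hd 1 1

theorem comp {H : Type*} [Group H] (hd : IsCrossedHom ψ d) (f : H →* G) :
    IsCrossedHom (ψ.comp f) (d ∘ f) := fun x y => by
  simp [hd (f x) (f y)]

theorem sub_one_mul_eq_of_commute (hd : IsCrossedHom ψ d) {x y : G} (h : Commute x y) :
    (ψ x - 1 : R) * d y = (ψ y - 1) * d x := by
  have hxy : d x + ψ x * d y = d y + ψ y * d x := by rw [← hd, ← hd, h.eq]
  linear_combination hxy

theorem sub_one_mul_zpow (hd : IsCrossedHom ψ d) (x : G) (n : ℤ) :
    (ψ x - 1 : R) * d (x ^ n) = ((ψ x ^ n : Rˣ) - 1) * d x := by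
  rw [hd.sub_one_mul_eq_of_commute (Commute.self_zpow x n), map_zpow]

theorem map_zpow_eq_zero [IsDomain R] (hd : IsCrossedHom ψ d) {x : G} {n : ℤ} (hx : ψ x ≠ 1)
    (hn : ψ x ^ n = 1) : d (x ^ n) = 0 := by
  refine (mul_eq_zero.1 ?_).resolve_left (sub_ne_zero.2 (Units.val_eq_one.not.2 hx))
  rw [hd.sub_one_mul_zpow, hn, Units.val_one, sub_self, zero_mul]

/-- The kernel of a crossed homomorphism, a subgroup that need not be normal. -/
def ker (hd : IsCrossedHom ψ d) : Subgroup G where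
  carrier := {x | d x = 0}
  one_mem' := hd.map_one
  mul_mem' {x y} (hx : d x = 0) (hy : d y = 0) := by simp [hd x y, hx, hy]
  inv_mem' {x} (hx : d x = 0) := by simpa [hx, hd.map_one] using (hd x⁻¹ x).symm

theorem mem_ker (hd : IsCrossedHom ψ d) {x : G} : x ∈ hd.ker ↔ d x = 0 := Iff.rfl

theorem of_affineGroup {φ : G →* AffineGroup R} (hφ : SemidirectProduct.rightHom.comp φ = ψ) :
    IsCrossedHom ψ fun x => (φ x).left.toAdd := by
  subst hφ
  intro x y
  simp only [map_mul]
  rfl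

/-- The action `x ↦ (z ↦ ψ x * z + d x)` on the line given by a crossed homomorphism. -/
def toAffineGroup (hd : IsCrossedHom ψ d) : G →* AffineGroup R where
  toFun x := ⟨.ofAdd (d x), ψ x⟩
  map_one' := SemidirectProduct.ext hd.map_one (_root_.map_one ψ)
  map_mul' x y := by rw [hd, map_mul]; rfl

end IsCrossedHom

section FreeGroups

variable {G ι : Type*} [Group G]

theorem exists_isCrossedHom_of_basis {R : Type*} [CommRing R] (bas : FreeGroupBasis ι G)
    (ψ : G →* Rˣ) (v : ι → R) : ∃ d : G → R, IsCrossedHom ψ d ∧ ∀ i, d (bas i) = v i := by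
  let φ : G →* AffineGroup R := bas.lift fun i => ⟨.ofAdd (v i), ψ (bas i)⟩
  have hφ (i : ι) : φ (bas i) = ⟨.ofAdd (v i), ψ (bas i)⟩ :=
    congrFun (bas.lift.symm_apply_apply _) i
  have hψ : SemidirectProduct.rightHom.comp φ = ψ := bas.ext_hom _ _ fun i =>
    congrArg SemidirectProduct.rightHom (hφ i)
  exact ⟨_, .of_affineGroup hψ, fun i => congrArg (fun e => e.left.toAdd) (hφ i)⟩

theorem Primitive.foxZeroLocus_eq_empty {R : Type*} [CommRing R] [Nontrivial R] {w : G}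
    (hw : Primitive w) : foxZeroLocus R w = ∅ := by
  obtain ⟨ι, bas, i, rfl⟩ := hw
  refine Set.eq_empty_of_forall_notMem fun ψ hψ => ?_
  obtain ⟨d, hd, hv⟩ := exists_isCrossedHom_of_basis bas ψ 1
  exact one_ne_zero ((hv i).symm.trans (hψ d hd))

theorem infinite_monoidHom_of_isFreeGroup [IsFreeGroup G] [Nontrivial G] {P : Type*} [Group P]
    [Infinite P] : Infinite (G →* P) := by
  have : Nonempty (IsFreeGroup.Generators G) := not_isEmpty_iff.1 fun _ =>
    not_subsingleton G (IsFreeGroup.toFreeGroup G).toEquiv.subsingleton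
  exact IsFreeGroup.lift.infinite_iff.1 inferInstance

end FreeGroups

section FreeProducts

variable {G M N R : Type*} [Group G] [Group M] [Group N] [CommRing R] {i : M →* G} {j : N →* G}

theorem bijective_comp_of_bijective_coprodLift
    (h : Function.Bijective (Monoid.Coprod.lift i j)) (P : Type*) [Group P] :
    Function.Bijective fun φ : G →* P => (φ.comp i, φ.comp j) :=
  ((MulEquiv.ofBijective _ h).symm.monoidHomCongrLeftEquiv.trans
    Monoid.Coprod.liftEquiv.symm).bijective

theorem IsCrossedHom.exists_extension (h : Function.Bijective (Monoid.Coprod.lift i j))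
    {ψ : G →* Rˣ} {d : M → R} (hd : IsCrossedHom (ψ.comp i) d) :
    ∃ d' : G → R, IsCrossedHom ψ d' ∧ d' ∘ i = d := by
  obtain ⟨φ, hφ⟩ := (bijective_comp_of_bijective_coprodLift h (AffineGroup R)).surjective
    (hd.toAffineGroup, SemidirectProduct.inr.comp (ψ.comp j))
  obtain ⟨hi, hj⟩ := Prod.mk.inj hφ
  have hψ : SemidirectProduct.rightHom.comp φ = ψ := by
    refine (bijective_comp_of_bijective_coprodLift h Rˣ).injective (Prod.ext ?_ ?_)
    · exact congrArg SemidirectProduct.rightHom.comp hi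
    · exact congrArg SemidirectProduct.rightHom.comp hj
  exact ⟨_, .of_affineGroup hψ,
    funext fun x => congrArg (fun e => e.left.toAdd) (DFunLike.congr_fun hi x)⟩

theorem map_mem_foxZeroLocus_iff (h : Function.Bijective (Monoid.Coprod.lift i j)) {ψ : G →* Rˣ}
    {w : M} : ψ ∈ foxZeroLocus R (i w) ↔ ψ.comp i ∈ foxZeroLocus R w := by
  refine ⟨fun hψ d hd => ?_, fun hψ d hd => hψ _ (hd.comp i)⟩
  obtain ⟨d, hd', rfl⟩ := hd.exists_extension h
  exact hψ d hd'

theorem infinite_foxZeroLocus_map (h : Function.Bijective (Monoid.Coprod.lift i j))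
    [Infinite (N →* Rˣ)] {w : M} (hw : (foxZeroLocus R (i w)).Nonempty) :
    (foxZeroLocus R (i w)).Infinite := by
  obtain ⟨ψ, hψ⟩ := hw
  choose extend hextend using fun β : N →* Rˣ =>
    (bijective_comp_of_bijective_coprodLift h Rˣ).surjective (ψ.comp i, β)
  refine Set.infinite_of_injective_forall_mem (f := extend) (fun β β' hβ => ?_) fun β => ?_
  · simpa [hextend] using congrArg (fun φ : G →* Rˣ => (φ.comp i, φ.comp j)) hβ
  · rw [map_mem_foxZeroLocus_iff h] at hψ ⊢
    rwa [(Prod.mk.inj (hextend β)).1]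

theorem SimpleElem.infinite_foxZeroLocus [IsFreeGroup G] [Infinite Rˣ] {w : G}
    (hw : SimpleElem w) (hne : (foxZeroLocus R w).Nonempty) : (foxZeroLocus R w).Infinite := by
  obtain ⟨A, B, -, hB, hwA, hbij⟩ := hw
  have : Nontrivial B := (Subgroup.nontrivial_iff_ne_bot B).2 hB
  have : Infinite (B →* Rˣ) := infinite_monoidHom_of_isFreeGroup
  exact infinite_foxZeroLocus_map hbij (w := ⟨w, hwA⟩) hne

end FreeProducts

section ProductsOfPowers

variable {ι R : Type*} [CommRing R] {l : List ι} {k : ι → ℤ}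

theorem zpow_eq_one_of_mem_foxZeroLocus (hl : l.Nodup) {ψ : FreeGroup ι →* Rˣ}
    (hψ : ψ ∈ foxZeroLocus R (l.map fun i => FreeGroup.of i ^ k i).prod) {i : ι} (hi : i ∈ l) :
    ψ (.of i) ^ k i = 1 := by
  classical
  -- `d x = ψ (∂x/∂xᵢ)`, and only the factor `xᵢ ^ kᵢ` of the product contributes to `∂/∂xᵢ`.
  obtain ⟨d, hd, hv⟩ :=
    exists_isCrossedHom_of_basis (FreeGroupBasis.ofFreeGroup ι) ψ (Pi.single i 1)
  simp only [FreeGroupBasis.ofFreeGroup_apply] at hv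
  obtain ⟨s, t, rfl⟩ := List.append_of_mem hi
  have hker {r : List ι} (hr : i ∉ r) : (r.map fun j => FreeGroup.of j ^ k j).prod ∈ hd.ker := by
    refine hd.ker.list_prod_mem (List.forall_mem_map.2 fun j hj => hd.ker.zpow_mem ?_ _)
    rw [hd.mem_ker, hv, Pi.single_eq_of_ne (ne_of_mem_of_not_mem hj hr)]
  have hist : i ∉ s ++ t := (List.nodup_middle.1 hl).notMem
  rw [List.mem_append, not_or] at hist
  have hpow : FreeGroup.of i ^ k i ∈ hd.ker := by
    have hw := hd.mem_ker.2 (hψ d hd)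
    rwa [List.map_append, List.prod_append, List.map_cons, List.prod_cons,
      hd.ker.mul_mem_cancel_left (hker hist.1), hd.ker.mul_mem_cancel_right (hker hist.2)] at hw
  have hsub := hd.sub_one_mul_zpow (.of i) (k i)
  rw [hd.mem_ker.1 hpow, hv, Pi.single_eq_same, mul_zero, mul_one] at hsub
  exact Units.val_eq_one.1 (sub_eq_zero.1 hsub.symm)

variable [IsDomain R]

theorem finite_setOf_zpow_eq_one {n : ℤ} (hn : n ≠ 0) : {u : Rˣ | u ^ n = 1}.Finite := by
  have : NeZero n.natAbs := ⟨Int.natAbs_ne_zero.2 hn⟩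
  have hfin : Finite (rootsOfUnity n.natAbs R) := inferInstance
  exact (Set.finite_coe_iff.1 hfin).subset fun u hu => pow_natAbs_eq_one.2 hu

theorem mem_foxZeroLocus_prod_zpow {ψ : FreeGroup ι →* Rˣ}
    (h : ∀ i ∈ l, ψ (.of i) ≠ 1 ∧ ψ (.of i) ^ k i = 1) :
    ψ ∈ foxZeroLocus R (l.map fun i => FreeGroup.of i ^ k i).prod := fun d hd => by
  refine hd.mem_ker.1 (hd.ker.list_prod_mem (List.forall_mem_map.2 fun i hi => ?_))
  exact hd.mem_ker.2 (hd.map_zpow_eq_zero (h i hi).1 (h i hi).2)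

theorem finite_foxZeroLocus_prod_zpow (hl : l.Nodup) (hmem : ∀ i, i ∈ l) (hk : ∀ i, k i ≠ 0) :
    (foxZeroLocus R (l.map fun i => FreeGroup.of i ^ k i).prod).Finite := by
  have : Finite ι := Set.finite_univ_iff.1 (l.finite_toSet.subset fun i _ => hmem i)
  refine ((Set.Finite.pi fun i => finite_setOf_zpow_eq_one (hk i)).preimage
    (FreeGroup.lift (β := Rˣ)).symm.injective.injOn).subset fun ψ hψ i _ => ?_
  exact zpow_eq_one_of_mem_foxZeroLocus hl hψ (hmem i)

end ProductsOfPowers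

theorem infinite_units (K : Type*) [Field K] [Infinite K] : Infinite Kˣ :=
  unitsEquivNeZero.infinite_iff.2 (Set.finite_singleton (0 : K)).infinite_compl.to_subtype

theorem exists_complex_unit_ne_one_zpow_eq_one {n : ℤ} (hn : 2 ≤ n.natAbs) :
    ∃ u : ℂˣ, u ≠ 1 ∧ u ^ n = 1 := by
  have hζ := Complex.isPrimitiveRoot_exp n.natAbs (by omega)
  obtain ⟨u, hu⟩ := hζ.isUnit (by omega)
  rw [← hu, IsPrimitiveRoot.coe_units_iff] at hζ
  exact ⟨u, hζ.ne_one (by omega), pow_natAbs_eq_one.1 hζ.pow_eq_one⟩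

theorem not_simple_prod_powers_general {ι : Type*} {l : List ι} (hl : l.Nodup)
    (hmem : ∀ i, i ∈ l) {k : ι → ℤ} (hk : ∀ i, 2 ≤ (k i).natAbs) :
    ¬ SimpleElem (l.map fun i => FreeGroup.of i ^ k i).prod ∧
    ¬ Primitive (l.map fun i => FreeGroup.of i ^ k i).prod := by
  choose ζ hζ using fun i => exists_complex_unit_ne_one_zpow_eq_one (hk i)
  have hne : (foxZeroLocus ℂ (l.map fun i => FreeGroup.of i ^ k i).prod).Nonempty :=
    ⟨FreeGroup.lift ζ, mem_foxZeroLocus_prod_zpow fun i _ => by simpa using hζ i⟩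
  have hfin : (foxZeroLocus ℂ (l.map fun i => FreeGroup.of i ^ k i).prod).Finite :=
    finite_foxZeroLocus_prod_zpow hl hmem fun i =>
      Int.natAbs_pos.1 (two_pos.trans_le (hk i))
  have := infinite_units ℂ
  exact ⟨fun hw => hw.infinite_foxZeroLocus hne hfin,
    fun hw => hne.ne_empty hw.foxZeroLocus_eq_empty⟩

theorem not_simple_prod_powers (N : ℕ) (hN : 2 ≤ N) (k : Fin N → ℕ) (hk : ∀ i, 2 ≤ k i) :
    ¬ SimpleElem (((List.finRange N).map (fun i => FreeGroup.of i ^ k i)).prod) ∧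
    ¬ Primitive (((List.finRange N).map (fun i => FreeGroup.of i ^ k i)).prod) := by
  simpa using not_simple_prod_powers_general (List.nodup_finRange N) List.mem_finRange
    (k := fun i => k i) hk
end
end

section
/- For all integers i ≥ 3, setting n_i = lcm(1, 2, …, i), the primitivity index satisfies d_prim(a^{n_i} b^{n_i}; F₂) ≥ d(n_i) ≥ i + 1, where d(n) is the smallest integer ≥ 2 not dividing n. -/
noncomputable section

/-!
Let `n ≥ 3` and let `H` be a subgroup whose index is smaller than every non-divisor `d ≥ 2` of `n`.
Then `H` contains `a ^ k` and `b ^ l` for proper divisors `k` and `l` of `n`. Let `a` and `b` act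
on `ℂ` by multiplication by a primitive `n`-th root of unity. A cocycle `δ : H → ℂ` sends `a ^ n`
to a multiple of the sum of the powers of a nontrivial root of unity, namely the scalar by which
`a ^ k` acts; so `δ` vanishes on `a ^ n`, likewise on `b ^ n`, and hence on `a ^ n * b ^ n`. But a
cocycle on a free group may be prescribed arbitrarily on a basis, so `a ^ n * b ^ n` is not
primitive in `H`.

The primitivity index is moreover finite: let `a` act on `Fin n` as an `n`-cycle and `b` trivially.
Schreier's basis of the stabilizer of a point contains `a ^ n` and `b`, and replacing `a ^ n` by
`a ^ n * b ^ n` gives another basis.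
-/

section SchreierBasis

open Equiv Function

variable {α X Y Z : Type*}

theorem semiconj_of_forall_semiconj_of {f : Y → Z} {ρ : FreeGroup α →* Perm Y}
    {τ : FreeGroup α →* Perm Z}
    (h : ∀ s, Semiconj f (ρ (FreeGroup.of s)) (τ (FreeGroup.of s))) (w : FreeGroup α) :
    Semiconj f (ρ w) (τ w) := by
  induction w using FreeGroup.induction_on with
  | C1 => simp [Semiconj]
  | of s => exact h s
  | inv_of s hs =>
    rw [map_inv, map_inv]
    exact hs.inverses_right (ρ _).apply_symm_apply (τ _).symm_apply_apply
  | mul v w hv hw =>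
    rw [map_mul, map_mul]
    exact hv.comp_right hw

/-- `T` is a spanning tree of the Schreier graph on `X` with an edge from `x` to `σ s x`, encoded
as the pair `(x, s)`, for every letter `s`. The word `path x` labels the path in `T` from the root
`x₀` to `x`; words act on the left, so they are read from right to left. That `T` contains no cycle
is forced by the existence of `path`, since a nonempty reduced word is nontrivial. -/
structure IsSchreierTree (σ : α → Perm X) (x₀ : X) (T : Set (X × α)) (path : X → FreeGroup α) :
    Prop where
  path_root : path x₀ = 1
  path_step : ∀ {x s}, (x, s) ∈ T → path (σ s x) = FreeGroup.of s * path x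
  connected : ∀ x, Relation.EqvGen (fun y z => ∃ s, (y, s) ∈ T ∧ σ s y = z) x₀ x

open Classical in
/-- The element of the free group on the edges outside `T` carried by an edge: collapsing `T` to a
point kills the edges of `T` and keeps the others. -/
def edgeLabel (T : Set (X × α)) (e : X × α) : FreeGroup ↥Tᶜ :=
  if h : e ∈ T then 1 else FreeGroup.of ⟨e, h⟩

/-- The action of the free group on the covering `X × FreeGroup Tᶜ` of the Schreier graph of `σ`
in which crossing an edge multiplies the second coordinate by the label of that edge. -/
def edgeLabelAction (σ : α → Perm X) (T : Set (X × α)) :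
    FreeGroup α →* Perm (X × FreeGroup ↥Tᶜ) :=
  FreeGroup.lift fun s => (σ s).prodShear fun x => Equiv.mulLeft (edgeLabel T (x, s))

/-- The homomorphism sending an edge outside `T` to its Schreier generator: the loop at the root
that crosses this edge once and otherwise follows `path`. -/
def schreierGenerator (σ : α → Perm X) (T : Set (X × α)) (path : X → FreeGroup α) :
    FreeGroup ↥Tᶜ →* FreeGroup α :=
  FreeGroup.lift fun e => (path (σ e.1.2 e.1.1))⁻¹ * FreeGroup.of e.1.2 * path e.1.1

variable {σ : α → Perm X} {x₀ : X} {T : Set (X × α)} {path : X → FreeGroup α}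

theorem edgeLabel_of_mem {e : X × α} (he : e ∈ T) : edgeLabel T e = 1 := dif_pos he

theorem edgeLabel_of_notMem {e : X × α} (he : e ∉ T) :
    edgeLabel T e = FreeGroup.of ⟨e, he⟩ := dif_neg he

@[simp]
theorem edgeLabelAction_of (s : α) (p : X × FreeGroup ↥Tᶜ) :
    edgeLabelAction σ T (FreeGroup.of s) p = (σ s p.1, edgeLabel T (p.1, s) * p.2) := by
  simp [edgeLabelAction]

theorem edgeLabelAction_fst (w : FreeGroup α) (p : X × FreeGroup ↥Tᶜ) :
    (edgeLabelAction σ T w p).1 = FreeGroup.lift σ w p.1 :=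
  semiconj_of_forall_semiconj_of (f := Prod.fst) (fun s p => by simp) w p

namespace IsSchreierTree

variable (h : IsSchreierTree σ x₀ T path)
include h

theorem path_mul_schreierGenerator_edgeLabel (x : X) (s : α) :
    path (σ s x) * schreierGenerator σ T path (edgeLabel T (x, s)) =
      FreeGroup.of s * path x := by
  by_cases hT : (x, s) ∈ T
  · simp [edgeLabel_of_mem hT, h.path_step hT]
  · simp [edgeLabel_of_notMem hT, schreierGenerator, mul_assoc]

theorem path_mul_schreierGenerator_edgeLabelAction (w : FreeGroup α) (p : X × FreeGroup ↥Tᶜ) :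
    path (edgeLabelAction σ T w p).1 * schreierGenerator σ T path (edgeLabelAction σ T w p).2 =
      w * (path p.1 * schreierGenerator σ T path p.2) :=
  semiconj_of_forall_semiconj_of (τ := MulAction.toPermHom (FreeGroup α) (FreeGroup α))
    (f := fun p => path p.1 * schreierGenerator σ T path p.2)
    (fun s p => by
      simp [← mul_assoc, h.path_mul_schreierGenerator_edgeLabel]) w p

theorem edgeLabelAction_path (x : X) (k : FreeGroup ↥Tᶜ) :
    edgeLabelAction σ T (path x) (x₀, k) = (x, k) := by
  have iff_of_eqvGen {y z : X}
      (hyz : Relation.EqvGen (fun y z => ∃ s, (y, s) ∈ T ∧ σ s y = z) y z) :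
      edgeLabelAction σ T (path y) (x₀, k) = (y, k) ↔
        edgeLabelAction σ T (path z) (x₀, k) = (z, k) := by
    induction hyz with
    | rel y z hyz =>
      obtain ⟨s, hs, rfl⟩ := hyz
      have hcross : edgeLabelAction σ T (FreeGroup.of s) (y, k) = (σ s y, k) := by
        simp [edgeLabel_of_mem hs]
      rw [h.path_step hs, map_mul, Perm.mul_apply, ← hcross, EmbeddingLike.apply_eq_iff_eq]
    | refl => rfl
    | symm _ _ _ ih => exact ih.symm
    | trans _ _ _ _ _ ih₁ ih₂ => exact ih₁.trans ih₂
  exact (iff_of_eqvGen (h.connected x)).1 (by simp [h.path_root])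

theorem edgeLabelAction_schreierGenerator (k l : FreeGroup ↥Tᶜ) :
    edgeLabelAction σ T (schreierGenerator σ T path k) (x₀, l) = (x₀, k * l) := by
  refine (semiconj_of_forall_semiconj_of (f := fun l => (x₀, l))
    (ρ := MulAction.toPermHom (FreeGroup ↥Tᶜ) (FreeGroup ↥Tᶜ))
    (τ := (edgeLabelAction σ T).comp (schreierGenerator σ T path)) (fun e l => ?_) k l).symm
  obtain ⟨⟨x, s⟩, he⟩ := e
  simp [schreierGenerator, h.edgeLabelAction_path, edgeLabel_of_notMem he, eq_symm_apply]

theorem schreierGenerator_injective : Injective (schreierGenerator σ T path) := fun k l hkl => by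
  simpa [h.edgeLabelAction_schreierGenerator] using
    congrArg (fun w => edgeLabelAction σ T w (x₀, 1)) hkl

theorem range_schreierGenerator :
    (schreierGenerator σ T path).range =
      (MulAction.stabilizer (Perm X) x₀).comap (FreeGroup.lift σ) := by
  ext w
  rw [Subgroup.mem_comap, MulAction.mem_stabilizer_iff, Perm.smul_def]
  constructor
  · rintro ⟨k, rfl⟩
    rw [← edgeLabelAction_fst (T := T) _ (x₀, 1), h.edgeLabelAction_schreierGenerator]
  · intro hw
    refine ⟨(edgeLabelAction σ T w (x₀, 1)).2, ?_⟩
    simpa [edgeLabelAction_fst, hw, h.path_root] using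
      h.path_mul_schreierGenerator_edgeLabelAction w (x₀, 1)

/-- Schreier's free basis of the stabilizer of the root, indexed by the edges outside the tree. -/
def basis : FreeGroupBasis ↥Tᶜ ((MulAction.stabilizer (Perm X) x₀).comap (FreeGroup.lift σ)) :=
  (FreeGroupBasis.ofFreeGroup ↥Tᶜ).map <|
    (MonoidHom.ofInjective h.schreierGenerator_injective).trans
      (MulEquiv.subgroupCongr h.range_schreierGenerator)

theorem coe_basis_apply (e : ↥Tᶜ) :
    (h.basis e : FreeGroup α) =
      (path (σ e.1.2 e.1.1))⁻¹ * FreeGroup.of e.1.2 * path e.1.1 := by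
  change schreierGenerator σ T path (FreeGroup.of e) = _
  simp [schreierGenerator]

end IsSchreierTree

end SchreierBasis

section FiniteIndexPrimitive

open Equiv

theorem primitive_mul_of_mem_closure {ι : Type} {G : Type*} [Group G] (bas : FreeGroupBasis ι G)
    {i : ι} {g : G} (hg : g ∈ Subgroup.closure (bas '' {i}ᶜ)) : Primitive (bas i * g) := by
  classical
  let shear (k : G) : G →* G := bas.lift (Function.update bas i (bas i * k))
  have shear_self (k : G) : shear k (bas i) = bas i * k := by simp [shear]
  have shear_of_ne (k : G) {j : ι} (hj : j ≠ i) : shear k (bas j) = bas j := by simp [shear, hj]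
  have shear_of_mem (k : G) {c : G} (hc : c ∈ Subgroup.closure (bas '' {i}ᶜ)) :
      shear k c = c := by
    refine MonoidHom.eqOn_closure (g := MonoidHom.id G) ?_ hc
    rintro _ ⟨j, hj, rfl⟩
    exact shear_of_ne k hj
  have shear_comp_shear {k l : G} (hl : l ∈ Subgroup.closure (bas '' {i}ᶜ)) (hkl : k * l = 1) :
      (shear k).comp (shear l) = MonoidHom.id G := by
    refine bas.ext_hom _ _ fun j => ?_
    obtain rfl | hj := eq_or_ne j i
    · simp [shear_self, shear_of_mem k hl, mul_assoc, hkl]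
    · simp [shear_of_ne _ hj]
  let e : G ≃* G := MonoidHom.toMulEquiv (shear g) (shear g⁻¹)
    (shear_comp_shear hg (inv_mul_cancel g)) (shear_comp_shear (inv_mem hg) (mul_inv_cancel g))
  exact ⟨ι, bas.map e, i, shear_self g⟩

theorem isSchreierTree_cycle {α : Type*} [DecidableEq α] (s₀ : α) (k : ℕ) :
    IsSchreierTree (Pi.mulSingle s₀ (finRotate (k + 1))) 0
      {e | e.2 = s₀ ∧ e.1 ≠ Fin.last k} (fun x => FreeGroup.of s₀ ^ (x : ℕ)) where
  path_root := by simp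
  path_step := by
    rintro x _ ⟨rfl, hx⟩
    rw [Pi.mulSingle_eq_same, coe_finRotate_of_ne_last hx, pow_succ']
  connected x := by
    induction x using Fin.induction with
    | zero => exact .refl _
    | succ j ih =>
      exact ih.trans _ _ _ (.rel _ _ ⟨s₀, ⟨rfl, j.castSucc_lt_last.ne⟩, by simp⟩)

theorem exists_index_ne_zero_primitive_pow_mul_pow {α : Type} {s t : α} (hst : s ≠ t) {m : ℕ}
    (hm : m ≠ 0) (n : ℕ) :
    ∃ H : Subgroup (FreeGroup α), H.index ≠ 0 ∧
      ∃ hg : FreeGroup.of s ^ m * FreeGroup.of t ^ n ∈ H, Primitive (⟨_, hg⟩ : H) := by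
  classical
  obtain ⟨k, rfl⟩ := Nat.exists_eq_succ_of_ne_zero hm
  have tree := isSchreierTree_cycle s k
  let T : Set (Fin (k + 1) × α) := {e | e.2 = s ∧ e.1 ≠ Fin.last k}
  let closing : ↥Tᶜ := ⟨(Fin.last k, s), by simp [T]⟩
  let loop : ↥Tᶜ := ⟨(0, t), by simp [T, hst.symm]⟩
  have hclosing : (tree.basis closing : FreeGroup α) = FreeGroup.of s ^ (k + 1) := by
    simp [closing, tree.coe_basis_apply, pow_succ']
  have hloop : (tree.basis loop : FreeGroup α) = FreeGroup.of t := by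
    simp [loop, tree.coe_basis_apply, hst.symm]
  have hne : loop ∈ ({closing}ᶜ : Set ↥Tᶜ) := by simp [loop, closing, hst.symm]
  have hprim : Primitive (tree.basis closing * tree.basis loop ^ n) :=
    primitive_mul_of_mem_closure tree.basis
      (pow_mem (Subgroup.subset_closure (Set.mem_image_of_mem _ hne)) n)
  have hcoe : (↑(tree.basis closing * tree.basis loop ^ n) : FreeGroup α) =
      FreeGroup.of s ^ (k + 1) * FreeGroup.of t ^ n := by simp [hclosing, hloop]
  rw [← hcoe]
  refine ⟨_, ?_, SetLike.coe_mem _, hprim⟩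
  rw [Subgroup.index_comap]
  exact Subgroup.FiniteIndex.index_ne_zero

end FiniteIndexPrimitive

section Cocycle

open groupCohomology

variable {G M : Type*} [Group G] [AddCommGroup M] [DistribMulAction G M]

theorem exists_isCocycle₁_apply_eq {ι : Type*} (bas : FreeGroupBasis ι G) (v : ι → M) :
    ∃ δ : G → M, IsCocycle₁ δ ∧ ∀ i, δ (bas i) = v i := by
  -- Cocycles are the homomorphic sections of `M ⋊ G → G`, and these exist as `G` is free.
  let φ : G →* MulAut (Multiplicative M) :=
    (MulAutMultiplicative M).symm.toMonoidHom.comp (DistribMulAction.toAddAut G M)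
  let F : G →* Multiplicative M ⋊[φ] G := bas.lift fun i => ⟨.ofAdd (v i), bas i⟩
  have hF : SemidirectProduct.rightHom.comp F = MonoidHom.id G :=
    bas.ext_hom _ _ fun i => by simp [F]
  have right_F (g : G) : (F g).right = g := DFunLike.congr_fun hF g
  refine ⟨fun g => (F g).left.toAdd, fun g h => ?_, fun i => by simp [F]⟩
  change ((F (g * h)).left).toAdd = _
  rw [map_mul, SemidirectProduct.mul_left, right_F, toAdd_mul, add_comm]
  rfl

theorem isCocycle₁_map_pow {δ : G → M} (hδ : IsCocycle₁ δ) (g : G) (m : ℕ) :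
    δ (g ^ m) = ∑ j ∈ Finset.range m, g ^ j • δ g := by
  induction m with
  | zero => simp [map_one_of_isCocycle₁ hδ]
  | succ m ih => rw [pow_succ, hδ, ih, Finset.sum_range_succ, add_comm]

/-- Every cocycle vanishes on `x ^ m` and on `y ^ n`, while some cocycle does not vanish on a given
basis element. -/
theorem not_primitive_pow_mul_pow_of_sum_smul_eq_zero [Nontrivial M] {x y : G} {m n : ℕ}
    (hx : ∀ v : M, ∑ j ∈ Finset.range m, x ^ j • v = 0)
    (hy : ∀ v : M, ∑ j ∈ Finset.range n, y ^ j • v = 0) : ¬ Primitive (x ^ m * y ^ n) := by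
  rintro ⟨ι, bas, i, hi⟩
  obtain ⟨v, hv⟩ := exists_ne (0 : M)
  obtain ⟨δ, hδ, hδv⟩ := exists_isCocycle₁_apply_eq bas fun _ => v
  apply hv
  rw [← hδv i, hi, hδ, isCocycle₁_map_pow hδ, isCocycle₁_map_pow hδ, hx, hy, smul_zero, add_zero]

end Cocycle

section ProperPowers

theorem not_primitive_of_isPrimitiveRoot_of_pow_mem {G R : Type*} [Group G] [CommRing R]
    [IsDomain R] {χ : G →* Rˣ} {x y : G} {k l m n : ℕ} {H : Subgroup G}
    (hx : IsPrimitiveRoot (χ x) m) (hy : IsPrimitiveRoot (χ y) n)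
    (hk : k ∈ m.properDivisors) (hl : l ∈ n.properDivisors) (hxk : x ^ k ∈ H) (hyl : y ^ l ∈ H)
    (hg : x ^ m * y ^ n ∈ H) : ¬ Primitive (⟨x ^ m * y ^ n, hg⟩ : H) := by
  let : DistribMulAction G R := DistribMulAction.compHom R χ
  have smul_eq (g : G) (v : R) : g • v = χ g * v := rfl
  have sum_smul_eq_zero {z : G} {d q : ℕ} (hz : IsPrimitiveRoot (χ z) q)
      (hd : d ∈ q.properDivisors) (hzd : z ^ d ∈ H) (v : R) :
      ∑ j ∈ Finset.range (q / d), (⟨z ^ d, hzd⟩ : H) ^ j • v = 0 := by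
    have hroot : IsPrimitiveRoot ((χ z : R) ^ d) (q / d) :=
      (IsPrimitiveRoot.coe_units_iff.2 hz).pow (Nat.one_lt_of_mem_properDivisors hd).pos
        (Nat.mul_div_cancel' (Nat.mem_properDivisors.1 hd).1).symm
    have hgeom := hroot.geom_sum_eq_zero (Nat.one_lt_div_of_mem_properDivisors hd)
    simp [Subgroup.smul_def, smul_eq, ← Finset.sum_mul, hgeom]
  have hprod : (⟨x ^ m * y ^ n, hg⟩ : H) = ⟨x ^ k, hxk⟩ ^ (m / k) * ⟨y ^ l, hyl⟩ ^ (n / l) := by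
    ext
    simp [← pow_mul, Nat.mul_div_cancel' (Nat.mem_properDivisors.1 hk).1,
      Nat.mul_div_cancel' (Nat.mem_properDivisors.1 hl).1]
  rw [hprod]
  exact not_primitive_pow_mul_pow_of_sum_smul_eq_zero (sum_smul_eq_zero hx hk hxk)
    (sum_smul_eq_zero hy hl hyl)

theorem not_primitive_of_pow_mem {α : Type*} {s t : α} (hst : s ≠ t) {k l m n : ℕ}
    {H : Subgroup (FreeGroup α)} (hk : k ∈ m.properDivisors) (hl : l ∈ n.properDivisors)
    (hs : FreeGroup.of s ^ k ∈ H) (ht : FreeGroup.of t ^ l ∈ H)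
    (hg : FreeGroup.of s ^ m * FreeGroup.of t ^ n ∈ H) :
    ¬ Primitive (⟨FreeGroup.of s ^ m * FreeGroup.of t ^ n, hg⟩ : H) := by
  classical
  have exists_root {q d : ℕ} (hd : d ∈ q.properDivisors) : ∃ ζ : ℂˣ, IsPrimitiveRoot ζ q :=
    have hq : q ≠ 0 := (Nat.one_lt_of_mem_properDivisors hd).ne_zero
    ⟨_, (Complex.isPrimitiveRoot_exp q hq).isUnit_unit hq⟩
  obtain ⟨ζ, hζ⟩ := exists_root hk
  obtain ⟨ξ, hξ⟩ := exists_root hl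
  let χ : FreeGroup α →* ℂˣ := FreeGroup.lift (Function.update (fun _ => ξ) s ζ)
  have hχs : χ (FreeGroup.of s) = ζ := by simp [χ]
  have hχt : χ (FreeGroup.of t) = ξ := by simp [χ, hst.symm]
  exact not_primitive_of_isPrimitiveRoot_of_pow_mem (hχs ▸ hζ) (hχt ▸ hξ) hk hl hs ht hg

end ProperPowers

section SmallestNonDivisor

theorem smallestNonDivisor_lt {n : ℕ} (hn : 3 ≤ n) : smallestNonDivisor n < n := by
  have hdvd : ¬ n - 1 ∣ n := fun h => by
    have hdvd_one : n - 1 ∣ n - (n - 1) := Nat.dvd_sub h dvd_rfl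
    have := Nat.le_of_dvd (by omega) hdvd_one
    omega
  have hle : smallestNonDivisor n ≤ n - 1 := Nat.sInf_le ⟨by omega, hdvd⟩
  omega

theorem dvd_of_lt_smallestNonDivisor {n k : ℕ} (hk : k ≠ 0) (hlt : k < smallestNonDivisor n) :
    k ∣ n := by
  by_contra h
  have hk_ne_one : k ≠ 1 := fun h_one => h (h_one ▸ one_dvd n)
  exact Nat.notMem_of_lt_sInf hlt ⟨by omega, h⟩

theorem mem_properDivisors_of_lt_smallestNonDivisor {n k : ℕ} (hn : 3 ≤ n) (hk : k ≠ 0)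
    (hlt : k < smallestNonDivisor n) : k ∈ n.properDivisors :=
  Nat.mem_properDivisors.2
    ⟨dvd_of_lt_smallestNonDivisor hk hlt, hlt.trans (smallestNonDivisor_lt hn)⟩

theorem lt_smallestNonDivisor_of_lcm_Icc_dvd {i n : ℕ} (hn : n ≠ 0)
    (hdvd : (Finset.Icc 1 i).lcm id ∣ n) : i < smallestNonDivisor n := by
  have hnonempty : {d : ℕ | 2 ≤ d ∧ ¬ d ∣ n}.Nonempty :=
    ⟨n + 1, by omega, Nat.not_dvd_of_pos_of_lt (Nat.pos_of_ne_zero hn) n.lt_succ_self⟩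
  obtain ⟨htwo, hnot⟩ := Nat.sInf_mem hnonempty
  by_contra! hle
  have hmem : smallestNonDivisor n ∈ Finset.Icc 1 i :=
    Finset.mem_Icc.2 ⟨one_le_two.trans htwo, hle⟩
  exact hnot ((Finset.dvd_lcm (f := id) hmem).trans hdvd)

theorem le_lcm_Icc_id (i : ℕ) : i ≤ (Finset.Icc 1 i).lcm id := by
  obtain rfl | hi := Nat.eq_zero_or_pos i
  · exact Nat.zero_le _
  · have hlcm : (Finset.Icc 1 i).lcm id ≠ 0 := by simp [Finset.lcm_eq_zero_iff]
    exact Nat.le_of_dvd (Nat.pos_of_ne_zero hlcm)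
      (Finset.dvd_lcm (f := id) (Finset.mem_Icc.2 ⟨hi, le_rfl⟩))

end SmallestNonDivisor

theorem min_smallestNonDivisor_le_dPrim {m n : ℕ} (hm : 3 ≤ m) (hn : 3 ≤ n) :
    min (smallestNonDivisor m) (smallestNonDivisor n) ≤ dPrim (a ^ m * b ^ n) := by
  have hst : (0 : Fin 2) ≠ 1 := zero_ne_one
  obtain ⟨H₀, hH₀, hprim₀⟩ :=
    exists_index_ne_zero_primitive_pow_mul_pow hst (m := m) (by omega) n
  -- Without `H₀` the infimum defining `dPrim` could be that of the empty set, which is `0`.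
  refine le_csInf ⟨H₀.index, Nat.pos_of_ne_zero hH₀, H₀, rfl, hprim₀⟩ ?_
  rintro _ ⟨hindex, H, rfl, hg, hprim⟩
  by_contra! hlt
  obtain ⟨hltm, hltn⟩ := lt_min_iff.1 hlt
  obtain ⟨k, hk, hkle, hak⟩ := H.exists_pow_mem_of_index_ne_zero hindex.ne' a
  obtain ⟨l, hl, hlle, hbl⟩ := H.exists_pow_mem_of_index_ne_zero hindex.ne' b
  exact not_primitive_of_pow_mem hst
    (mem_properDivisors_of_lt_smallestNonDivisor hm hk.ne' (hkle.trans_lt hltm))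
    (mem_properDivisors_of_lt_smallestNonDivisor hn hl.ne' (hlle.trans_lt hltn))
    hak hbl hg hprim

theorem dPrim_ge_smallestNonDivisor_general {i m n : ℕ} (hm : 3 ≤ m) (hn : 3 ≤ n)
    (him : (Finset.Icc 1 i).lcm id ∣ m) (hin : (Finset.Icc 1 i).lcm id ∣ n) :
    i + 1 ≤ min (smallestNonDivisor m) (smallestNonDivisor n) ∧
      min (smallestNonDivisor m) (smallestNonDivisor n) ≤ dPrim (a ^ m * b ^ n) :=
  ⟨le_min (lt_smallestNonDivisor_of_lcm_Icc_dvd (by omega) him)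
      (lt_smallestNonDivisor_of_lcm_Icc_dvd (by omega) hin),
    min_smallestNonDivisor_le_dPrim hm hn⟩

theorem dPrim_ge_smallestNonDivisor (i : ℕ) (hi : 3 ≤ i)
    (n : ℕ) (hn : n = (Finset.Icc 1 i).lcm id) :
    i + 1 ≤ smallestNonDivisor n ∧
      smallestNonDivisor n ≤ dPrim (a ^ n * b ^ n) := by
  have hle : 3 ≤ n := hi.trans ((le_lcm_Icc_id i).trans_eq hn.symm)
  simpa using dPrim_ge_smallestNonDivisor_general hle hle hn.symm.dvd hn.symm.dvd
end
end
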